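/- Newman's value for Υ⁵ at π/2: −(1/6) · ∫₀^{π/2} (π/2 − t)³ · log(sin t) dt = −(31/256) · ζ(5) + (π²/32) · ζ(3) + (π⁴/384) · log 2. -/

import Mathlib

open Real MeasureTheory

/-- The Riemann zeta value `ζ k = ∑_{m ≥ 1} 1 / m ^ k`. -/
noncomputable def zetaVal (k : ℕ) : ℝ := ∑' m : ℕ+, 1 / (m : ℝ) ^ k

/-!
Put `z = exp (2it)`. On the unit circle `log (2 sin t) = log |1 - z| = -∑ Re (zⁿ) / n` only
conditionally, so the series is first integrated against `(π/2 - t)³` on the circle `|z| = r < 1`,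
where it converges uniformly. Letting `r → 1`, dominated convergence handles the integral, because
`|1 - z| ≤ 2 |1 - rz|`, and Abel's limit theorem handles the series. The moments
`∫ (π/2 - t)³ cos (2nt) dt = 3π² / (16 n²) - 3 (1 - (-1)ⁿ) / (8 n⁴)` then produce `ζ(3)` and `ζ(5)`.
-/

open Filter Topology Set

theorem hasSum_re_pow_div_natCast {z : ℂ} (hz : ‖z‖ < 1) :
    HasSum (fun n : ℕ ↦ (z ^ n).re / n) (-log ‖1 - z‖) := by
  simpa only [Complex.div_natCast_re, Complex.neg_re, Complex.log_re] using
    Complex.hasSum_re (Complex.hasSum_taylorSeries_neg_log hz)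

theorem abs_re_pow_div_natCast_le (z : ℂ) (n : ℕ) : |(z ^ n).re / n| ≤ ‖z‖ ^ n := by
  rcases n.eq_zero_or_pos with rfl | hn
  · simp
  calc |(z ^ n).re / n| = |(z ^ n).re| / n := by rw [abs_div, Nat.abs_cast]
    _ ≤ |(z ^ n).re| := div_le_self (abs_nonneg _) (mod_cast hn)
    _ ≤ ‖z‖ ^ n := norm_pow z n ▸ Complex.abs_re_le_norm _

theorem norm_one_sub_le_two_mul_norm_one_sub_mul {z : ℂ} (hz : ‖z‖ ≤ 1) {r : ℝ}
    (hr₀ : 0 ≤ r) (hr₁ : r ≤ 1) : ‖1 - z‖ ≤ 2 * ‖1 - r * z‖ := by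
  have hrz : ‖r * z‖ = r * ‖z‖ := by rw [norm_mul, Complex.norm_of_nonneg hr₀]
  have hdist : ‖(1 - r : ℝ) * z‖ ≤ ‖1 - r * z‖ := calc
    ‖(1 - r : ℝ) * z‖ = (1 - r) * ‖z‖ := by
      rw [norm_mul, Complex.norm_of_nonneg (sub_nonneg.2 hr₁)]
    _ ≤ 1 - r * ‖z‖ := by linarith
    _ = ‖(1 : ℂ)‖ - ‖r * z‖ := by rw [hrz, norm_one]
    _ ≤ ‖1 - r * z‖ := norm_sub_norm_le _ _
  calc ‖1 - z‖ = ‖(1 - r * z) - (1 - r : ℝ) * z‖ := by push_cast; ring_nf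
    _ ≤ ‖1 - r * z‖ + ‖(1 - r : ℝ) * z‖ := norm_sub_le _ _
    _ ≤ 2 * ‖1 - r * z‖ := by linarith

theorem abs_log_norm_one_sub_mul_le {z : ℂ} (hz : ‖z‖ ≤ 1) (hz₁ : z ≠ 1) {r : ℝ}
    (hr₀ : 0 ≤ r) (hr₁ : r ≤ 1) : |log ‖1 - r * z‖| ≤ log 2 + |log ‖1 - z‖| := by
  have hpos : 0 < ‖1 - z‖ := norm_pos_iff.2 (sub_ne_zero.2 hz₁.symm)
  have hlower := norm_one_sub_le_two_mul_norm_one_sub_mul hz hr₀ hr₁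
  have hpos' : 0 < ‖1 - r * z‖ := by linarith
  have hupper : ‖1 - r * z‖ ≤ 2 := calc
    ‖1 - r * z‖ ≤ ‖(1 : ℂ)‖ + ‖r * z‖ := norm_sub_le _ _
    _ = 1 + r * ‖z‖ := by rw [norm_one, norm_mul, Complex.norm_of_nonneg hr₀]
    _ ≤ 2 := by linarith [mul_le_one₀ hr₁ (norm_nonneg z) hz]
  have hlog_lower := log_le_log hpos hlower
  rw [log_mul two_ne_zero hpos'.ne'] at hlog_lower
  have hlog_upper := log_le_log hpos' hupper
  exact abs_le.2 ⟨by linarith [neg_abs_le (log ‖1 - z‖)],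
    by linarith [abs_nonneg (log ‖1 - z‖)]⟩

section Integral

variable {α : Type*} [MeasurableSpace α] {μ : Measure α} {f : α → ℝ} {z : α → ℂ}

theorem hasSum_integral_mul_re_pow_div_mul_pow (hf : Integrable f μ)
    (hz : AEStronglyMeasurable z μ) (hz_le : ∀ᵐ x ∂μ, ‖z x‖ ≤ 1) {r : ℝ} (hr : |r| < 1) :
    HasSum (fun n : ℕ ↦ (∫ x, f x * (z x ^ n).re ∂μ) / n * r ^ n)
      (-∫ x, f x * log ‖1 - r * z x‖ ∂μ) := by
  have hterm (n : ℕ) (x : α) : f x * (((r * z x) ^ n).re / n) =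
      f x * (z x ^ n).re * (r ^ n / n) := by
    rw [mul_pow, ← Complex.ofReal_pow, Complex.re_ofReal_mul]
    ring
  have hrz : ∀ᵐ x ∂μ, ‖r * z x‖ ≤ |r| := by
    filter_upwards [hz_le] with x hx
    rw [norm_mul, Complex.norm_real, norm_eq_abs]
    exact mul_le_of_le_one_right (abs_nonneg r) hx
  have hsum : HasSum (fun n : ℕ ↦ ∫ x, f x * (((r * z x) ^ n).re / n) ∂μ)
      (∫ x, f x * -log ‖1 - r * z x‖ ∂μ) := by
    refine hasSum_integral_of_dominated_convergence (fun n x ↦ |f x| * |r| ^ n)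
      (fun n ↦ ?_) (fun n ↦ ?_) ?_ ?_ ?_
    · have hre : AEStronglyMeasurable (fun x ↦ ((r * z x) ^ n).re) μ :=
        Complex.continuous_re.comp_aestronglyMeasurable ((hz.const_mul _).pow n)
      exact hf.1.mul (hre.aemeasurable.div_const _).aestronglyMeasurable
    · filter_upwards [hrz] with x hx
      rw [norm_mul, norm_eq_abs, norm_eq_abs]
      gcongr
      exact (abs_re_pow_div_natCast_le _ n).trans (by gcongr)
    · exact .of_forall fun x ↦ (summable_geometric_of_lt_one (abs_nonneg r) hr).mul_left _
    · simpa only [tsum_mul_left] using hf.abs.mul_const _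
    · filter_upwards [hrz] with x hx
      exact (hasSum_re_pow_div_natCast (hx.trans_lt hr)).mul_left _
  simp only [hterm, integral_mul_const, mul_neg, integral_neg] at hsum
  simpa only [div_mul_eq_mul_div, mul_div_assoc] using hsum

theorem tendsto_integral_mul_log_norm_one_sub_mul (hf : Integrable f μ)
    (hz : AEStronglyMeasurable z μ) (hz_le : ∀ᵐ x ∂μ, ‖z x‖ ≤ 1) (hz_ne : ∀ᵐ x ∂μ, z x ≠ 1)
    (hlog : Integrable (fun x ↦ f x * log ‖1 - z x‖) μ) :
    Tendsto (fun r : ℝ ↦ ∫ x, f x * log ‖1 - r * z x‖ ∂μ) (𝓝[<] 1)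
      (𝓝 (∫ x, f x * log ‖1 - z x‖ ∂μ)) := by
  refine tendsto_integral_filter_of_dominated_convergence
    (fun x ↦ |f x| * log 2 + |f x * log ‖1 - z x‖|) (.of_forall fun r ↦ ?_) ?_
    ((hf.abs.mul_const _).add hlog.abs) ?_
  · have hnorm : AEStronglyMeasurable (fun x ↦ ‖1 - r * z x‖) μ :=
      (aestronglyMeasurable_const.sub (hz.const_mul _)).norm
    exact hf.1.mul (measurable_log.comp_aemeasurable hnorm.aemeasurable).aestronglyMeasurable
  · filter_upwards [Ioo_mem_nhdsLT (zero_lt_one' ℝ)] with r hr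
    filter_upwards [hz_le, hz_ne] with x hx hx'
    rw [norm_mul, norm_eq_abs, norm_eq_abs, abs_mul, ← mul_add]
    gcongr
    exact abs_log_norm_one_sub_mul_le hx hx' hr.1.le hr.2.le
  · filter_upwards [hz_ne] with x hx
    have hcont : ContinuousAt (fun r : ℝ ↦ f x * log ‖1 - r * z x‖) 1 := by
      refine continuousAt_const.mul (ContinuousAt.log (by fun_prop) ?_)
      simpa [sub_eq_zero] using hx.symm
    simpa [ContinuousAt] using hcont.tendsto.mono_left nhdsWithin_le_nhds

theorem integral_mul_log_norm_one_sub_of_tendsto (hf : Integrable f μ)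
    (hz : AEStronglyMeasurable z μ) (hz_le : ∀ᵐ x ∂μ, ‖z x‖ ≤ 1) (hz_ne : ∀ᵐ x ∂μ, z x ≠ 1)
    (hlog : Integrable (fun x ↦ f x * log ‖1 - z x‖) μ) {S : ℝ}
    (hS : Tendsto (fun N ↦ ∑ n ∈ Finset.range N, (∫ x, f x * (z x ^ n).re ∂μ) / n) atTop (𝓝 S)) :
    ∫ x, f x * log ‖1 - z x‖ ∂μ = -S := by
  have habel := Real.tendsto_tsum_powerSeries_nhdsWithin_lt hS
  have hdom := (tendsto_integral_mul_log_norm_one_sub_mul hf hz hz_le hz_ne hlog).neg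
  refine neg_eq_iff_eq_neg.1 (tendsto_nhds_unique_of_eventuallyEq hdom habel ?_)
  filter_upwards [Ioo_mem_nhdsLT (neg_lt_self (zero_lt_one' ℝ))] with r hr
  exact (hasSum_integral_mul_re_pow_div_mul_pow hf hz hz_le (abs_lt.2 hr)).tsum_eq.symm

end Integral

theorem ae_sin_ne_zero : ∀ᵐ t : ℝ, sin t ≠ 0 := by
  have hzeros : {t : ℝ | sin t = 0} = range fun n : ℤ ↦ n * π :=
    Set.ext fun _ ↦ Real.sin_eq_zero_iff
  exact (hzeros ▸ countable_range _ : {t : ℝ | sin t = 0}.Countable).ae_notMem volume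

theorem norm_one_sub_exp_two_mul_mul_I (t : ℝ) :
    ‖1 - Complex.exp ((2 * t : ℝ) * Complex.I)‖ = |2 * sin t| := by
  rw [norm_sub_rev, mul_comm _ Complex.I, Complex.norm_exp_I_mul_ofReal_sub_one,
    mul_div_cancel_left₀ t two_ne_zero, norm_eq_abs]

theorem re_exp_two_mul_mul_I_pow (t : ℝ) (n : ℕ) :
    (Complex.exp ((2 * t : ℝ) * Complex.I) ^ n).re = cos (2 * n * t) := by
  rw [← Complex.exp_nat_mul, ← Complex.exp_ofReal_mul_I_re]
  push_cast
  ring_nf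

theorem integral_mul_log_two_mul_sin_of_tendsto {f : ℝ → ℝ} {a b S : ℝ}
    (hf : ContinuousOn f (uIcc a b)) (hS : Tendsto (fun N ↦ ∑ n ∈ Finset.range N,
      (∫ t in a..b, f t * cos (2 * n * t)) / n) atTop (𝓝 S)) :
    ∫ t in a..b, f t * log (2 * sin t) = -S := by
  wlog hab : a ≤ b generalizing a b S
  · have hS' := hS.neg
    simp only [intervalIntegral.integral_symm b a, neg_div, Finset.sum_neg_distrib, neg_neg] at hS'
    have hf' : ContinuousOn f (uIcc b a) := uIcc_comm a b ▸ hf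
    rw [intervalIntegral.integral_symm, this hf' hS' (le_of_not_ge hab), neg_neg]
  have hlog (t : ℝ) : log ‖1 - Complex.exp ((2 * t : ℝ) * Complex.I)‖ = log (2 * sin t) := by
    rw [norm_one_sub_exp_two_mul_mul_I, log_abs]
  have hlog_int : IntervalIntegrable (fun t ↦ log (2 * sin t)) volume a b :=
    (analyticOnNhd_const.mul analyticOnNhd_sin).meromorphicOn.intervalIntegrable_log
  simp only [intervalIntegral.integral_of_le hab, ← hlog, ← re_exp_two_mul_mul_I_pow] at hS ⊢
  refine integral_mul_log_norm_one_sub_of_tendsto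
    hf.intervalIntegrable.1 (by fun_prop) (.of_forall fun t ↦ ?_) ?_ ?_ hS
  · exact (Complex.norm_exp_ofReal_mul_I _).le
  · filter_upwards [ae_restrict_of_ae ae_sin_ne_zero] with t ht h
    have hnorm := norm_one_sub_exp_two_mul_mul_I t
    rw [h, sub_self, norm_zero, eq_comm, abs_eq_zero] at hnorm
    exact ht (by linarith)
  · simp only [hlog]
    exact (hlog_int.continuousOn_mul hf).1

theorem integral_mul_log_sin_of_tendsto {f : ℝ → ℝ} {a b S : ℝ}
    (hf : ContinuousOn f (uIcc a b)) (hS : Tendsto (fun N ↦ ∑ n ∈ Finset.range N,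
      (∫ t in a..b, f t * cos (2 * n * t)) / n) atTop (𝓝 S)) :
    ∫ t in a..b, f t * log (sin t) = -S - (∫ t in a..b, f t) * log 2 := by
  have hsplit : ∫ t in a..b, f t * log (2 * sin t) =
      ∫ t in a..b, (f t * log 2 + f t * log (sin t)) := by
    refine intervalIntegral.integral_congr_ae ?_
    filter_upwards [ae_sin_ne_zero] with t ht _
    rw [log_mul two_ne_zero ht, mul_add]
  have hlog_sin : IntervalIntegrable (fun t ↦ f t * log (sin t)) volume a b :=
    intervalIntegrable_log_sin.continuousOn_mul hf
  rw [intervalIntegral.integral_add (hf.intervalIntegrable.mul_const _) hlog_sin,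
    intervalIntegral.integral_mul_const, integral_mul_log_two_mul_sin_of_tendsto hf hS] at hsplit
  linear_combination -hsplit

section Moments

variable (k : ℕ) (b : ℝ) {c : ℝ}

theorem hasDerivAt_sub_pow_succ (t : ℝ) :
    HasDerivAt (fun t ↦ (b - t) ^ (k + 1)) (-((k + 1) * (b - t) ^ k)) t := by
  simpa using ((hasDerivAt_id t).const_sub b).fun_pow (k + 1)

theorem integral_sub_pow_succ_mul_cos (hc : c ≠ 0) :
    ∫ t in 0..b, (b - t) ^ (k + 1) * cos (c * t) =
      (k + 1) / c * ∫ t in 0..b, (b - t) ^ k * sin (c * t) := by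
  have hv (t : ℝ) : HasDerivAt (fun t ↦ sin (c * t) / c) (cos (c * t)) t := by
    simpa [hc] using (((hasDerivAt_id t).const_mul c).sin.div_const c)
  have hparts (t : ℝ) : -((k + 1) * (b - t) ^ k) * (sin (c * t) / c) =
      -((k + 1) / c) * ((b - t) ^ k * sin (c * t)) := by ring
  rw [intervalIntegral.integral_mul_deriv_eq_deriv_mul
    (fun t _ ↦ hasDerivAt_sub_pow_succ k b t) (fun t _ ↦ hv t)
    (Continuous.intervalIntegrable (by fun_prop) _ _)
    (Continuous.intervalIntegrable (by fun_prop) _ _)]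
  simp only [hparts, intervalIntegral.integral_const_mul]
  simp

theorem integral_sub_pow_succ_mul_sin (hc : c ≠ 0) :
    ∫ t in 0..b, (b - t) ^ (k + 1) * sin (c * t) =
      b ^ (k + 1) / c - (k + 1) / c * ∫ t in 0..b, (b - t) ^ k * cos (c * t) := by
  have hv (t : ℝ) : HasDerivAt (fun t ↦ -cos (c * t) / c) (sin (c * t)) t := by
    simpa [hc] using (((hasDerivAt_id t).const_mul c).cos.neg.div_const c)
  have hparts (t : ℝ) : -((k + 1) * (b - t) ^ k) * (-cos (c * t) / c) =
      (k + 1) / c * ((b - t) ^ k * cos (c * t)) := by ring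
  rw [intervalIntegral.integral_mul_deriv_eq_deriv_mul
    (fun t _ ↦ hasDerivAt_sub_pow_succ k b t) (fun t _ ↦ hv t)
    (Continuous.intervalIntegrable (by fun_prop) _ _)
    (Continuous.intervalIntegrable (by fun_prop) _ _)]
  simp only [hparts, intervalIntegral.integral_const_mul]
  simp [div_eq_mul_inv]

theorem integral_sub_pow_three_mul_cos (hc : c ≠ 0) :
    ∫ t in 0..b, (b - t) ^ 3 * cos (c * t) =
      3 * b ^ 2 / c ^ 2 - 6 * (1 - cos (c * b)) / c ^ 4 := by
  have hsin : ∫ t in 0..b, sin (c * t) = (1 - cos (c * b)) / c := by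
    simp [hc, div_eq_inv_mul]
  rw [integral_sub_pow_succ_mul_cos 2 b hc, integral_sub_pow_succ_mul_sin 1 b hc,
    integral_sub_pow_succ_mul_cos 0 b hc]
  simp only [pow_zero, one_mul, hsin]
  field_simp
  push_cast
  ring

end Moments

theorem hasSum_one_div_natCast_pow_zetaVal {k : ℕ} (hk : 1 < k) :
    HasSum (fun n : ℕ ↦ 1 / (n : ℝ) ^ k) (zetaVal k) := by
  have hsummable : Summable fun n : ℕ ↦ 1 / (n : ℝ) ^ k := summable_one_div_nat_pow.2 hk
  have hk₀ : k ≠ 0 := by lia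
  rw [hsummable.hasSum_iff, zetaVal, ← tsum_zero_pnat_eq_tsum_nat hsummable]
  simp [hk₀]

theorem hasSum_neg_one_pow_div_natCast_pow {k : ℕ} (hk : 1 < k) :
    HasSum (fun n : ℕ ↦ (-1) ^ n / (n : ℝ) ^ k) ((2 / 2 ^ k - 1) * zetaVal k) := by
  have hzeta := hasSum_one_div_natCast_pow_zetaVal hk
  have heven : HasSum (fun m : ℕ ↦ (1 + (-1) ^ (2 * m)) / ((2 * m : ℕ) : ℝ) ^ k)
      (2 / 2 ^ k * zetaVal k) := by
    have hterm (m : ℕ) : (1 + (-1) ^ (2 * m)) / ((2 * m : ℕ) : ℝ) ^ k =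
        2 / 2 ^ k * (1 / (m : ℝ) ^ k) := by
      rw [pow_mul, neg_one_sq, one_pow, Nat.cast_mul, mul_pow, Nat.cast_two]
      ring
    simpa only [hterm] using hzeta.mul_left _
  have hodd : HasSum (fun m : ℕ ↦ (1 + (-1) ^ (2 * m + 1)) / ((2 * m + 1 : ℕ) : ℝ) ^ k) 0 := by
    simp [pow_succ, pow_mul]
  have hsum := (heven.even_add_odd (f := fun n : ℕ ↦ (1 + (-1) ^ n) / (n : ℝ) ^ k) hodd).sub hzeta
  simpa [add_div, sub_mul] using hsum

theorem hasSum_integral_pi_div_two_sub_pow_three_mul_cos_div :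
    HasSum (fun n : ℕ ↦ (∫ t in (0 : ℝ)..π / 2, (π / 2 - t) ^ 3 * cos (2 * n * t)) / (n : ℝ))
      (3 * π ^ 2 / 16 * zetaVal 3 - 93 / 128 * zetaVal 5) := by
  have hmoment (n : ℕ) : (∫ t in (0 : ℝ)..π / 2, (π / 2 - t) ^ 3 * cos (2 * n * t)) / (n : ℝ) =
      3 * π ^ 2 / 16 * (1 / (n : ℝ) ^ 3) - 3 / 8 * (1 / (n : ℝ) ^ 5 - (-1) ^ n / (n : ℝ) ^ 5) := by
    rcases eq_or_ne n 0 with rfl | hn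
    · simp
    have hn' : (n : ℝ) ≠ 0 := mod_cast hn
    have hangle : 2 * (n : ℝ) * (π / 2) = n * π := by ring
    rw [integral_sub_pow_three_mul_cos _ (by positivity), hangle, cos_nat_mul_pi]
    field_simp
    ring
  have hzeta_five := hasSum_one_div_natCast_pow_zetaVal (k := 5) (by norm_num)
  have halt_five := hasSum_neg_one_pow_div_natCast_pow (k := 5) (by norm_num)
  have hzeta_three := hasSum_one_div_natCast_pow_zetaVal (k := 3) (by norm_num)
  have hvalue : 3 * π ^ 2 / 16 * zetaVal 3 - 93 / 128 * zetaVal 5 = 3 * π ^ 2 / 16 * zetaVal 3 -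
      3 / 8 * (zetaVal 5 - (2 / 2 ^ 5 - 1) * zetaVal 5) := by ring
  simpa only [hmoment, hvalue] using
    (hzeta_three.mul_left _).sub ((hzeta_five.sub halt_five).mul_left _)

theorem upsilon_five_at_pi_div_two :
    -(1 / 6) * ∫ t in (0:ℝ)..(π / 2), (π / 2 - t) ^ 3 * Real.log (Real.sin t) =
      -(31 / 256) * zetaVal 5 + π ^ 2 / 32 * zetaVal 3 +
        π ^ 4 / 384 * Real.log 2 := by
  have hcube : ∫ t in (0 : ℝ)..π / 2, (π / 2 - t) ^ 3 = π ^ 4 / 64 := by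
    rw [intervalIntegral.integral_comp_sub_left (· ^ 3) (π / 2), integral_pow]
    ring
  rw [integral_mul_log_sin_of_tendsto (by fun_prop)
    hasSum_integral_pi_div_two_sub_pow_three_mul_cos_div.tendsto_sum_nat, hcube]
  ring
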